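/- Let S = [-1,1] × [-1,1] ⊆ ℝ² be the square with vertices (±1, ±1). For every triangle Δ = conv{a,b,c} with a, b, c ∈ S and a + b + c = 0 (i.e., Δ ⊆ S with centroid at the center of S), the interior of the triangle (5/2)·Δ does not contain S. -/

import Mathlib

open Pointwise

/-!
Let `D = |a ∧ b| = |b ∧ c| = |c ∧ a|`. The interior of `r • Δ` is cut out by three open half-planes,
and the one bounded by the line through `r • a` and `r • b` contains the square exactly when the
taxicab length of `a - b` is less than `r * D`. So it suffices that some side has taxicab length at
least `5 / 2 * D`.

Each coordinate has an extreme vertex, at which its sign is opposite to that at the other two. If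
both coordinates have the same extreme vertex, one of the two sides through it even has length at
least `3 * D`. Otherwise the lengths of all three sides have to be combined; the triangle with
vertices `(1, -1/5)`, `(-1/5, 1)`, `(-4/5, -4/5)`, all of whose sides have length exactly
`5 / 2 * D`, dictates the weights.
-/

section Functionals

variable {E : Type*} [AddCommGroup E] [Module ℝ E] {s : Set E} {r m : ℝ}

lemma mul_le_apply_of_mem_smul_convexHull (f : E →ₗ[ℝ] ℝ) (hr : 0 ≤ r)
    (hs : ∀ x ∈ s, m ≤ f x) {p : E} (hp : p ∈ r • convexHull ℝ s) : r * m ≤ f p := by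
  obtain ⟨x, hx, rfl⟩ := hp
  have hx' : m ≤ f x := convexHull_min hs (convex_halfSpace_ge f.isLinear m) hx
  simpa only [map_smul, smul_eq_mul] using mul_le_mul_of_nonneg_left hx' hr

variable [TopologicalSpace E] [ContinuousAdd E] [ContinuousSMul ℝ E]

lemma lt_apply_of_mem_interior {f : E →L[ℝ] ℝ} (hf : f ≠ 0) (hs : ∀ x ∈ s, m ≤ f x) {p : E}
    (hp : p ∈ interior s) : m < f p := by
  have hp' : p ∈ interior (f ⁻¹' Set.Ici m) := interior_mono hs hp
  rwa [← (f.isOpenMap_of_ne_zero hf).preimage_interior_eq_interior_preimage f.continuous,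
    interior_Ici] at hp'

lemma mul_lt_apply_of_mem_interior_smul_convexHull {f : E →L[ℝ] ℝ} (hf : f ≠ 0) (hr : 0 ≤ r)
    (hs : ∀ x ∈ s, m ≤ f x) {p : E} (hp : p ∈ interior (r • convexHull ℝ s)) : r * m < f p :=
  lt_apply_of_mem_interior hf
    (fun _ hx ↦ mul_le_apply_of_mem_smul_convexHull f.toLinearMap hr hs hx) hp

end Functionals

section OrderedRing

variable {R : Type*} [CommRing R] [LinearOrder R] [IsStrictOrderedRing R]

lemma abs_eq_abs_add_abs_of_add_add_eq_zero {x y z : R} (h : x + y + z = 0) (hyz : 0 ≤ y * z) :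
    |x| = |y| + |z| := by
  rw [← (abs_add_eq_add_abs_iff y z).2 (mul_nonneg_iff.1 hyz), ← abs_neg x]
  congr 1
  linarith

lemma abs_sub_eq_two_mul_abs_add_abs {x y z : R} (h : x + y + z = 0) (hyz : 0 ≤ y * z) :
    |x - y| = 2 * |y| + |z| := by
  have h2yz : 0 ≤ (2 * y) * z := by linarith
  rw [abs_eq_abs_add_abs_of_add_add_eq_zero (by linarith : (x - y) + 2 * y + z = 0) h2yz, abs_mul,
    abs_two]

lemma three_mul_add_le_or_of_add_le_one {u v s t : R} (hu : 0 ≤ u) (hv : 0 ≤ v) (hs : 0 ≤ s)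
    (ht : 0 ≤ t) (huv : u + v ≤ 1) (hst : s + t ≤ 1) :
    3 * (u * t + v * s) ≤ (2 * u + v) + (2 * s + t) ∨
    3 * (u * t + v * s) ≤ (2 * v + u) + (2 * t + s) := by
  have hle : u * t + v * s ≤ (u + v) * (s + t) := by
    linarith [mul_nonneg hu hs, mul_nonneg hv ht]
  have hle_left : (u + v) * (s + t) ≤ u + v := mul_le_of_le_one_right (add_nonneg hu hv) hst
  have hle_right : (u + v) * (s + t) ≤ s + t := mul_le_of_le_one_left (add_nonneg hs ht) huv
  by_contra! h
  linarith [h.1, h.2]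

end OrderedRing

lemma five_halves_mul_le_or_of_add_le_one {K : Type*} [Field K] [LinearOrder K]
    [IsStrictOrderedRing K] {u v s t : K} (hu : 0 ≤ u) (hv : 0 ≤ v) (hs : 0 ≤ s)
    (ht : 0 ≤ t) (huv : u + v ≤ 1) (hst : s + t ≤ 1) :
    5 / 2 * (u * t + v * s + v * t) ≤ (2 * u + v) + (2 * s + t) ∨
    5 / 2 * (u * t + v * s + v * t) ≤ (v - u) + (2 * t + s) ∨
    5 / 2 * (u * t + v * s + v * t) ≤ (2 * v + u) + (t - s) := by
  have hu_le : u * (s + t) ≤ u := mul_le_of_le_one_right hu hst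
  have hv_le : v * (s + t) ≤ v := mul_le_of_le_one_right hv hst
  have hs_le : (u + v) * s ≤ s := mul_le_of_le_one_left hs huv
  have ht_le : (u + v) * t ≤ t := mul_le_of_le_one_left ht huv
  by_contra! h
  obtain ⟨h₁, h₂, h₃⟩ := h
  -- Add the three failing bounds with weights `(1, 1, 0)`, `(1, 0, 1)` and `(4, 3, 3)`; the
  -- last weights are chosen so that the quadratic remainder factors.
  have hmul_u : 0 < u * (t - 4 * s) := by linarith
  have hmul_s : 0 < s * (v - 4 * u) := by linarith
  have hmul : (v - 4 * u) * (t - 4 * s) < 0 := by linarith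
  have ht_pos : 0 < t - 4 * s := pos_of_mul_pos_right hmul_u hu
  have hv_pos : 0 < v - 4 * u := pos_of_mul_pos_right hmul_s hs
  exact hmul.not_gt (mul_pos hv_pos ht_pos)

section Wedge

/-- The signed area of the parallelogram spanned by two plane vectors, as a continuous linear
functional of the second one: every functional on the plane has this form. -/
def wedge (w : ℝ × ℝ) : ℝ × ℝ →L[ℝ] ℝ :=
  w.1 • ContinuousLinearMap.snd ℝ ℝ ℝ - w.2 • ContinuousLinearMap.fst ℝ ℝ ℝ

variable {a b c w : ℝ × ℝ}

lemma wedge_apply (w p : ℝ × ℝ) : wedge w p = w.1 * p.2 - w.2 * p.1 := rfl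

lemma wedge_self (w : ℝ × ℝ) : wedge w w = 0 := by
  simp only [wedge_apply]; ring

lemma wedge_swap (a b : ℝ × ℝ) : wedge b a = -wedge a b := by
  simp only [wedge_apply]; ring

lemma wedge_sub_apply (a b p : ℝ × ℝ) : wedge (a - b) p = wedge a p - wedge b p := by
  simp only [wedge_apply, Prod.fst_sub, Prod.snd_sub]; ring

lemma wedge_ne_zero (hw : w ≠ 0) : wedge w ≠ 0 := by
  intro h
  have h₁ : wedge w (0, 1) = 0 := by rw [h]; rfl
  have h₂ : wedge w (1, 0) = 0 := by rw [h]; rfl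
  simp only [wedge_apply] at h₁ h₂
  exact hw (Prod.ext (by simpa using h₁) (by simpa using h₂))

lemma wedge_eq_of_add_add_eq_zero (h : a + b + c = 0) : wedge b c = wedge a b := by
  obtain rfl : c = -b - a := by rw [← sub_eq_zero, ← h]; abel
  rw [map_sub, map_neg, wedge_self, wedge_swap a b]
  ring

lemma exists_ne_zero_wedge_eq_zero (h : wedge a b = 0) :
    ∃ w ≠ 0, wedge w a = 0 ∧ wedge w b = 0 := by
  rcases eq_or_ne a 0 with rfl | ha
  · rcases eq_or_ne b 0 with rfl | hb
    · exact ⟨(1, 0), by simp, map_zero _, map_zero _⟩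
    · exact ⟨b, hb, map_zero _, wedge_self b⟩
  · exact ⟨a, ha, wedge_self a, h⟩

lemma wedge_ne_zero_of_interior_nonempty {r : ℝ} (hr : 0 ≤ r) (h : a + b + c = 0)
    (hne : (interior (r • convexHull ℝ {a, b, c})).Nonempty) : wedge a b ≠ 0 := by
  intro hab
  obtain ⟨w, hw, hwa, hwb⟩ := exists_ne_zero_wedge_eq_zero hab
  have hwc : wedge w c = 0 := by
    simpa only [map_add, hwa, hwb, zero_add, map_zero] using congrArg (wedge w) h
  have hzero : ∀ x ∈ ({a, b, c} : Set (ℝ × ℝ)), wedge w x = 0 := by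
    rintro x (rfl | rfl | rfl) <;> assumption
  obtain ⟨p, hp⟩ := hne
  have hpos : r * 0 < wedge w p := mul_lt_apply_of_mem_interior_smul_convexHull
    (wedge_ne_zero hw) hr (fun x hx ↦ (hzero x hx).ge) hp
  have hneg : r * 0 < (-wedge w) p := mul_lt_apply_of_mem_interior_smul_convexHull
    (neg_ne_zero.2 (wedge_ne_zero hw)) hr (fun x hx ↦ (neg_eq_zero.2 (hzero x hx)).ge) hp
  rw [neg_apply] at hneg
  linarith

end Wedge

section Taxicab

/-- The `ℓ¹` norm on the plane, whereas the norm of `ℝ × ℝ` in Mathlib is the sup norm. -/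
def taxicabNorm (w : ℝ × ℝ) : ℝ := |w.1| + |w.2|

lemma taxicabNorm_sub_comm (a b : ℝ × ℝ) : taxicabNorm (a - b) = taxicabNorm (b - a) := by
  simp only [taxicabNorm, Prod.fst_sub, Prod.snd_sub, abs_sub_comm a.1, abs_sub_comm a.2]

lemma exists_mem_square_wedge_eq_neg_taxicabNorm (w : ℝ × ℝ) :
    ∃ p ∈ Set.Icc ((-1, -1) : ℝ × ℝ) (1, 1), wedge w p = -taxicabNorm w := by
  have sign_mem (x : ℝ) : -1 ≤ (SignType.sign x : ℝ) ∧ (SignType.sign x : ℝ) ≤ 1 := by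
    rcases SignType.sign x <;> norm_num
  refine ⟨(SignType.sign w.2, -SignType.sign w.1),
    ⟨⟨(sign_mem _).1, neg_le_neg (sign_mem _).2⟩, (sign_mem _).2, neg_le.1 (sign_mem _).1⟩, ?_⟩
  simp only [wedge_apply, taxicabNorm, mul_neg, self_mul_sign]
  ring

lemma taxicabNorm_lt_of_square_subset_interior {s : Set (ℝ × ℝ)} {w : ℝ × ℝ} {r m : ℝ}
    (hr : 0 ≤ r) (hs : Set.Icc ((-1, -1) : ℝ × ℝ) (1, 1) ⊆ interior (r • convexHull ℝ s))
    (hw : w ≠ 0) (hm : ∀ x ∈ s, -m ≤ wedge w x) : taxicabNorm w < r * m := by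
  obtain ⟨p, hp, hwp⟩ := exists_mem_square_wedge_eq_neg_taxicabNorm w
  have hlt := mul_lt_apply_of_mem_interior_smul_convexHull (wedge_ne_zero hw) hr hm (hs hp)
  linarith

lemma taxicabNorm_side_lt_of_square_subset_interior {a b c : ℝ × ℝ} {r : ℝ} (hr : 0 ≤ r)
    (h : a + b + c = 0)
    (hs : Set.Icc ((-1, -1) : ℝ × ℝ) (1, 1) ⊆ interior (r • convexHull ℝ {a, b, c})) :
    taxicabNorm (a - b) < r * |wedge a b| := by
  wlog hpos : 0 ≤ wedge b a generalizing a b with H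
  · rw [taxicabNorm_sub_comm, wedge_swap b a, abs_neg]
    exact H (by rwa [add_comm b]) (by rwa [Set.insert_comm]) (by linarith [wedge_swap a b])
  have hne : wedge a b ≠ 0 :=
    wedge_ne_zero_of_interior_nonempty hr h ⟨_, hs (Set.left_mem_Icc.2 (by norm_num))⟩
  have hab : a - b ≠ 0 := by
    rw [sub_ne_zero]
    rintro rfl
    exact hne (wedge_self a)
  have hbc : wedge b c = wedge a b := wedge_eq_of_add_add_eq_zero h
  have hac : wedge a c = wedge b a := wedge_eq_of_add_add_eq_zero (by rwa [add_comm b])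
  rw [wedge_swap b a, abs_neg, abs_of_nonneg hpos]
  refine taxicabNorm_lt_of_square_subset_interior hr hs hab ?_
  rintro x (rfl | rfl | rfl) <;> rw [wedge_sub_apply]
  · linarith [wedge_self x]
  · linarith [wedge_self x, wedge_swap a x]
  · linarith [wedge_swap a b]

end Taxicab

section LongSide

variable {a b c p q : ℝ × ℝ}

/-- The condition under which the line through `(5 / 2) • p` and `(5 / 2) • q` meets the square
`[-1, 1]²`; it is used for the sides of a triangle with centroid at the origin. -/
def IsLongSide (p q : ℝ × ℝ) : Prop := 5 / 2 * |wedge p q| ≤ taxicabNorm (p - q)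

lemma IsLongSide.symm (h : IsLongSide p q) : IsLongSide q p := by
  rwa [IsLongSide, wedge_swap p q, abs_neg, taxicabNorm_sub_comm]

lemma isLongSide_or_of_same_extreme (h : a + b + c = 0) (ha₁ : |a.1| ≤ 1) (ha₂ : |a.2| ≤ 1)
    (hx : 0 ≤ b.1 * c.1) (hy : 0 ≤ b.2 * c.2) : IsLongSide a b ∨ IsLongSide c a := by
  obtain ⟨h₁, h₂⟩ : a.1 + b.1 + c.1 = 0 ∧ a.2 + b.2 + c.2 = 0 := Prod.ext_iff.1 h
  have hab : taxicabNorm (a - b) = (2 * |b.1| + |c.1|) + (2 * |b.2| + |c.2|) :=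
    congrArg₂ _ (abs_sub_eq_two_mul_abs_add_abs h₁ hx) (abs_sub_eq_two_mul_abs_add_abs h₂ hy)
  have hca : taxicabNorm (c - a) = (2 * |c.1| + |b.1|) + (2 * |c.2| + |b.2|) := by
    rw [taxicabNorm_sub_comm]
    exact congrArg₂ _
      (abs_sub_eq_two_mul_abs_add_abs (by rwa [add_right_comm]) (by rwa [mul_comm]))
      (abs_sub_eq_two_mul_abs_add_abs (by rwa [add_right_comm]) (by rwa [mul_comm]))
  have hwedge : |wedge b c| ≤ |b.1| * |c.2| + |c.1| * |b.2| := by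
    rw [wedge_apply, ← abs_mul, ← abs_mul, mul_comm c.1]
    exact abs_sub _ _
  have hca_eq : wedge c a = wedge b c := wedge_eq_of_add_add_eq_zero (by rwa [← add_rotate])
  have hpos : 0 ≤ |wedge b c| := abs_nonneg _
  rw [abs_eq_abs_add_abs_of_add_add_eq_zero h₁ hx] at ha₁
  rw [abs_eq_abs_add_abs_of_add_add_eq_zero h₂ hy] at ha₂
  rw [IsLongSide, IsLongSide, ← wedge_eq_of_add_add_eq_zero h, hca_eq, hab, hca]
  refine (three_mul_add_le_or_of_add_le_one (abs_nonneg _) (abs_nonneg _) (abs_nonneg _)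
    (abs_nonneg _) ha₁ ha₂).imp ?_ ?_ <;> intro hle <;> linarith

lemma isLongSide_or_of_ne_extreme (h : a + b + c = 0) (ha : |a.1| ≤ 1) (hb : |b.2| ≤ 1)
    (hx : 0 ≤ b.1 * c.1) (hy : 0 ≤ c.2 * a.2) :
    IsLongSide a b ∨ IsLongSide b c ∨ IsLongSide c a := by
  obtain ⟨h₁, h₂⟩ : a.1 + b.1 + c.1 = 0 ∧ a.2 + b.2 + c.2 = 0 := Prod.ext_iff.1 h
  have hx' : 0 ≤ c.1 * b.1 := by rwa [mul_comm]
  have hy' : 0 ≤ a.2 * c.2 := by rwa [mul_comm]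
  have hab : taxicabNorm (a - b) = (2 * |b.1| + |c.1|) + (2 * |a.2| + |c.2|) :=
    congrArg₂ _ (abs_sub_eq_two_mul_abs_add_abs h₁ hx)
      ((abs_sub_comm _ _).trans (abs_sub_eq_two_mul_abs_add_abs (by linarith) hy'))
  have hbc : (|c.1| - |b.1|) + (2 * |c.2| + |a.2|) ≤ taxicabNorm (b - c) :=
    add_le_add ((abs_sub_abs_le_abs_sub _ _).trans_eq (abs_sub_comm _ _))
      (abs_sub_eq_two_mul_abs_add_abs (by linarith) hy).ge
  have hca : (2 * |c.1| + |b.1|) + (|c.2| - |a.2|) ≤ taxicabNorm (c - a) :=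
    add_le_add
      ((abs_sub_comm _ _).trans (abs_sub_eq_two_mul_abs_add_abs (by linarith) hx')).ge
      (abs_sub_abs_le_abs_sub _ _)
  have hwedge : |wedge b c| ≤ |b.1| * |c.2| + |c.1| * |a.2| + |c.1| * |c.2| := by
    have hexpand : wedge b c = b.1 * c.2 + c.1 * a.2 + c.1 * c.2 := by
      rw [wedge_apply]; linear_combination -c.1 * h₂
    simpa only [hexpand, abs_mul] using abs_add_three (b.1 * c.2) (c.1 * a.2) (c.1 * c.2)
  have hca_eq : wedge c a = wedge b c := wedge_eq_of_add_add_eq_zero (by rwa [← add_rotate])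
  rw [abs_eq_abs_add_abs_of_add_add_eq_zero h₁ hx] at ha
  rw [abs_eq_abs_add_abs_of_add_add_eq_zero (by linarith) hy'] at hb
  rw [IsLongSide, IsLongSide, IsLongSide, ← wedge_eq_of_add_add_eq_zero h, hca_eq]
  refine (five_halves_mul_le_or_of_add_le_one (abs_nonneg _) (abs_nonneg _) (abs_nonneg _)
    (abs_nonneg _) ha hb).imp ?_ (Or.imp ?_ ?_) <;> intro hle <;> linarith

lemma isLongSide_or_of_fst_mul_nonneg (h : a + b + c = 0) (ha₁ : |a.1| ≤ 1) (ha₂ : |a.2| ≤ 1)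
    (hb₂ : |b.2| ≤ 1) (hc₂ : |c.2| ≤ 1) (hx : 0 ≤ b.1 * c.1) :
    IsLongSide a b ∨ IsLongSide b c ∨ IsLongSide c a := by
  rcases mul_nonneg_of_three a.2 b.2 c.2 with hy | hy | hy
  · have hac := isLongSide_or_of_ne_extreme (by rwa [add_right_comm]) ha₁ hc₂
      (by rwa [mul_comm]) (by rwa [mul_comm])
    rcases hac with hac | hcb | hba
    exacts [.inr (.inr hac.symm), .inr (.inl hcb.symm), .inl hba.symm]
  · exact (isLongSide_or_of_same_extreme h ha₁ ha₂ hx hy).imp_right .inr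
  · exact isLongSide_or_of_ne_extreme h ha₁ hb₂ hx hy

theorem isLongSide_or_of_mem_square (h : a + b + c = 0)
    (ha : a ∈ Set.Icc ((-1, -1) : ℝ × ℝ) (1, 1)) (hb : b ∈ Set.Icc ((-1, -1) : ℝ × ℝ) (1, 1))
    (hc : c ∈ Set.Icc ((-1, -1) : ℝ × ℝ) (1, 1)) :
    IsLongSide a b ∨ IsLongSide b c ∨ IsLongSide c a := by
  have abs_le_one {p : ℝ × ℝ} (hp : p ∈ Set.Icc ((-1, -1) : ℝ × ℝ) (1, 1)) :
      |p.1| ≤ 1 ∧ |p.2| ≤ 1 :=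
    ⟨abs_le.2 ⟨hp.1.1, hp.2.1⟩, abs_le.2 ⟨hp.1.2, hp.2.2⟩⟩
  obtain ⟨ha₁, ha₂⟩ := abs_le_one ha
  obtain ⟨hb₁, hb₂⟩ := abs_le_one hb
  obtain ⟨hc₁, hc₂⟩ := abs_le_one hc
  rcases mul_nonneg_of_three a.1 b.1 c.1 with hx | hx | hx
  · exact or_rotate.1
      (isLongSide_or_of_fst_mul_nonneg (by rwa [add_rotate]) hc₁ hc₂ ha₂ hb₂ hx)
  · exact isLongSide_or_of_fst_mul_nonneg h ha₁ ha₂ hb₂ hc₂ hx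
  · exact or_rotate.2
      (isLongSide_or_of_fst_mul_nonneg (by rwa [← add_rotate]) hb₁ hb₂ hc₂ ha₂ hx)

end LongSide

theorem square_not_subset_interior_of_homothetic_triangle
    (S : Set (ℝ × ℝ)) (hS : S = Set.Icc ((-1, -1) : ℝ × ℝ) (1, 1))
    (a b c : ℝ × ℝ) (ha : a ∈ S) (hb : b ∈ S) (hc : c ∈ S)
    (hsum : a + b + c = 0) :
    ¬ S ⊆ interior ((5 / 2 : ℝ) • convexHull ℝ {a, b, c}) := by
  subst hS
  intro hsub
  have not_long (p q z : ℝ × ℝ) (hpqz : ({p, q, z} : Set (ℝ × ℝ)) = {a, b, c})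
      (h : p + q + z = 0) : ¬ IsLongSide p q :=
    (taxicabNorm_side_lt_of_square_subset_interior (by norm_num) h (by rwa [hpqz])).not_ge
  rcases isLongSide_or_of_mem_square hsum ha hb hc with hab | hbc | hca
  · exact not_long a b c rfl hsum hab
  · exact not_long b c a (by grind) (by rwa [← add_rotate]) hbc
  · exact not_long c a b (by grind) (by rwa [add_rotate]) hca
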